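/- arXiv:2208.13981 — 5 statements merged into one kernel-verified Lean document; each statement's English description precedes it below -/
import Mathlib

section
/- Suppose the position tracking error q̃ : ℝ → (Fin n → ℝ) is differentiable and satisfies the closed-loop equation obtained from the virtual (backstepped) input η(t) = q̇_d(t) − q̃(t) − (1/2) M(t)⁻¹ M′(t) q̃(t), namely q̃′(t) = −q̃(t) − (1/2) M(t)⁻¹ M′(t) q̃(t) for all t. Then the function V₁(t) = (1/2) q̃(t)ᵀ M(t) q̃(t) is differentiable and satisfies V₁′(t) = − q̃(t)ᵀ M(t) q̃(t) for all t. -/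
open Matrix

/-!
The product rule gives `V₁′ = (1/2) (q̃′ᵀ M q̃ + q̃ᵀ M′ q̃ + q̃ᵀ M q̃′)`, and symmetry of `M` makes
the two outer terms equal. Multiplying the closed-loop equation by `M` yields
`M q̃′ = -M q̃ - (1/2) M′ q̃`, so the two `M′` contributions cancel and `-q̃ᵀ M q̃` remains.
-/

theorem hasDerivAt_dotProduct {n : ℕ} {u v : ℝ → Fin n → ℝ} {u' v' : Fin n → ℝ} {t : ℝ}
    (hu : HasDerivAt u u' t) (hv : HasDerivAt v v' t) :
    HasDerivAt (fun s => u s ⬝ᵥ v s) (u' ⬝ᵥ v t + u t ⬝ᵥ v') t := by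
  rw [hasDerivAt_pi] at hu hv
  simp only [dotProduct, ← Finset.sum_add_distrib]
  exact HasDerivAt.fun_sum fun i _ => (hu i).mul (hv i)

/-- With the backstepped virtual input, the closed-loop position
tracking error satisfies `q̃′ = −q̃ − (1/2) M⁻¹ M′ q̃`, and then
`V₁(t) = (1/2) q̃(t)ᵀ M(t) q̃(t)` is differentiable with
`V₁′(t) = − q̃(t)ᵀ M(t) q̃(t)` for all `t`. -/
theorem statement0 (n : ℕ) (hn : 1 ≤ n)
    (M M' : ℝ → Matrix (Fin n) (Fin n) ℝ)
    (hMderiv : ∀ t : ℝ, ∀ i j : Fin n, HasDerivAt (fun s => M s i j) (M' t i j) t)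
    (hMsymm : ∀ t : ℝ, (M t).IsSymm)
    (hMpd : ∀ t : ℝ, (M t).PosDef)
    (qtil qtil' : ℝ → Fin n → ℝ)
    (hq : ∀ t : ℝ, HasDerivAt qtil (qtil' t) t)
    (hclosed : ∀ t : ℝ, qtil' t = -qtil t - (1/2 : ℝ) • ((M t)⁻¹ *ᵥ (M' t *ᵥ qtil t))) :
    ∀ t : ℝ, HasDerivAt (fun s => (1/2 : ℝ) * (qtil s ⬝ᵥ (M s *ᵥ qtil s)))
      (-(qtil t ⬝ᵥ (M t *ᵥ qtil t))) t := by
  intro t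
  have hMrow (i : Fin n) : HasDerivAt (fun s => M s i) (M' t i) t :=
    hasDerivAt_pi.2 (hMderiv t i)
  have hMq : HasDerivAt (fun s => M s *ᵥ qtil s) (M' t *ᵥ qtil t + M t *ᵥ qtil' t) t :=
    hasDerivAt_pi.2 fun i => hasDerivAt_dotProduct (hMrow i) (hq t)
  have hsymm : qtil' t ⬝ᵥ (M t *ᵥ qtil t) = qtil t ⬝ᵥ (M t *ᵥ qtil' t) := by
    rw [dotProduct_mulVec, ← mulVec_transpose, (hMsymm t).eq, dotProduct_comm]
  have hMq' : M t *ᵥ qtil' t = -(M t *ᵥ qtil t) - (1/2 : ℝ) • (M' t *ᵥ qtil t) := by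
    have hdet : IsUnit (M t).det := (hMpd t).det_pos.ne'.isUnit
    rw [hclosed t, mulVec_sub, mulVec_neg, mulVec_smul, mulVec_mulVec,
      mul_nonsing_inv _ hdet, one_mulVec]
  refine ((hasDerivAt_dotProduct (hq t) hMq).const_mul (1/2 : ℝ)).congr_deriv ?_
  rw [hsymm, dotProduct_add, hMq', dotProduct_sub, dotProduct_neg, dotProduct_smul, smul_eq_mul]
  ring
end

section
/- Suppose the position tracking error q̃ : ℝ → (Fin n → ℝ) is differentiable and satisfies q̃′(t) = −q̃(t) − (1/2) M(t)⁻¹ M′(t) q̃(t) for all t. Then the function V₁(t) = (1/2) q̃(t)ᵀ M(t) q̃(t) satisfies the scalar differential equation V₁′(t) = −2 V₁(t) for all t, and consequently V₁(t) = V₁(0) · exp(−2t) for all t ≥ 0. -/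
/-!
The product rule and the symmetry of `M` give `V₁′ = q̃ᵀ M q̃′ + (1/2) q̃ᵀ M′ q̃`. Multiplying the
closed-loop equation by `M` turns it into `M q̃′ = -M q̃ - (1/2) M′ q̃`, so the terms in `M′` cancel
and `V₁′ = -q̃ᵀ M q̃ = -2 V₁`. Hence `V₁(t) exp(2t)` has zero derivative and is constant.
-/

open Matrix

theorem hasDerivAt_quadForm {n : ℕ} {M : ℝ → Matrix (Fin n) (Fin n) ℝ}
    {A : Matrix (Fin n) (Fin n) ℝ} {x : ℝ → Fin n → ℝ} {v : Fin n → ℝ} {t : ℝ}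
    (hM : ∀ i j, HasDerivAt (fun s => M s i j) (A i j) t) (hx : HasDerivAt x v t) :
    HasDerivAt (fun s => x s ⬝ᵥ (M s *ᵥ x s))
      (v ⬝ᵥ (M t *ᵥ x t) + x t ⬝ᵥ (A *ᵥ x t + M t *ᵥ v)) t := by
  have hxi := hasDerivAt_pi.1 hx
  have h : HasDerivAt (fun s => ∑ i, x s i * ∑ j, M s i j * x s j)
      (∑ i, (v i * ∑ j, M t i j * x t j + x t i * ∑ j, (A i j * x t j + M t i j * v j))) t :=
    HasDerivAt.fun_sum fun i _ =>
      (hxi i).fun_mul (HasDerivAt.fun_sum fun j _ => (hM i j).fun_mul (hxi j))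
  refine h.congr_deriv ?_
  simp only [dotProduct, mulVec, Pi.add_apply, Finset.sum_add_distrib]

theorem eq_mul_exp_of_hasDerivAt {V : ℝ → ℝ} {c : ℝ} (hV : ∀ t, HasDerivAt V (c * V t) t)
    (t : ℝ) : V t = V 0 * Real.exp (c * t) := by
  have hW : ∀ s, HasDerivAt (fun s => V s * Real.exp (-(c * s))) 0 s := fun s => by
    have he := (((hasDerivAt_id s).const_mul c).fun_neg).exp
    refine ((hV s).fun_mul he).congr_deriv ?_
    simp only [id]
    ring
  have h := is_const_of_deriv_eq_zero (fun s => (hW s).differentiableAt)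
    (fun s => (hW s).deriv) t 0
  simp only [mul_zero, neg_zero, Real.exp_zero, mul_one] at h
  rw [← h, mul_assoc, ← Real.exp_add, neg_add_cancel, Real.exp_zero, mul_one]

/-- Under the closed-loop equation `q̃′ = −q̃ − (1/2) M⁻¹ M′ q̃`,
the function `V₁(t) = (1/2) q̃(t)ᵀ M(t) q̃(t)` satisfies `V₁′ = −2 V₁`, and
consequently `V₁(t) = V₁(0) · exp(−2t)` for all `t ≥ 0`. -/
theorem statement1 (n : ℕ) (hn : 1 ≤ n)
    (M M' : ℝ → Matrix (Fin n) (Fin n) ℝ)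
    (hMderiv : ∀ t : ℝ, ∀ i j : Fin n, HasDerivAt (fun s => M s i j) (M' t i j) t)
    (hMsymm : ∀ t : ℝ, (M t).IsSymm)
    (hMpd : ∀ t : ℝ, (M t).PosDef)
    (qtil qtil' : ℝ → Fin n → ℝ)
    (hq : ∀ t : ℝ, HasDerivAt qtil (qtil' t) t)
    (hclosed : ∀ t : ℝ, qtil' t = -qtil t - (1/2 : ℝ) • ((M t)⁻¹ *ᵥ (M' t *ᵥ qtil t))) :
    (∀ t : ℝ, HasDerivAt (fun s => (1/2 : ℝ) * (qtil s ⬝ᵥ (M s *ᵥ qtil s)))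
      (-2 * ((1/2 : ℝ) * (qtil t ⬝ᵥ (M t *ᵥ qtil t)))) t) ∧
    (∀ t : ℝ, 0 ≤ t →
      (1/2 : ℝ) * (qtil t ⬝ᵥ (M t *ᵥ qtil t))
        = (1/2 : ℝ) * (qtil 0 ⬝ᵥ (M 0 *ᵥ qtil 0)) * Real.exp (-2 * t)) := by
  have hV : ∀ t : ℝ, HasDerivAt (fun s => (1/2 : ℝ) * (qtil s ⬝ᵥ (M s *ᵥ qtil s)))
      (-2 * ((1/2 : ℝ) * (qtil t ⬝ᵥ (M t *ᵥ qtil t)))) t := by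
    intro t
    have hMq : M t *ᵥ qtil' t = -(M t *ᵥ qtil t) - (1/2 : ℝ) • (M' t *ᵥ qtil t) := by
      rw [hclosed, mulVec_sub, mulVec_neg, mulVec_smul, mulVec_mulVec,
        Matrix.mul_nonsing_inv _ (hMpd t).det_pos.ne'.isUnit, one_mulVec]
    have hsymm : qtil' t ⬝ᵥ (M t *ᵥ qtil t) = qtil t ⬝ᵥ (M t *ᵥ qtil' t) := by
      rw [dotProduct_mulVec, ← mulVec_transpose, (hMsymm t).eq, dotProduct_comm]
    refine ((hasDerivAt_quadForm (hMderiv t) (hq t)).const_mul (1/2 : ℝ)).congr_deriv ?_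
    rw [hsymm, dotProduct_add, hMq, dotProduct_sub, dotProduct_neg, dotProduct_smul, smul_eq_mul]
    ring
  exact ⟨hV, fun t _ => eq_mul_exp_of_hasDerivAt hV t⟩
end

section
/- Suppose the position tracking error q̃ : ℝ → (Fin n → ℝ) is differentiable and satisfies q̃′(t) = −q̃(t) − (1/2) M(t)⁻¹ M′(t) q̃(t) for all t, and suppose in addition that M is uniformly positive definite: there is m > 0 with xᵀ M(t) x ≥ m ‖x‖² for all t ∈ ℝ and all x ∈ Fin n → ℝ. Then ‖q̃(t)‖² ≤ (2/m) · V₁(0) · exp(−2t) for all t ≥ 0, where V₁(0) = (1/2) q̃(0)ᵀ M(0) q̃(0); in particular q̃(t) → 0 as t → ∞, i.e., the frictionless closed-loop motion is asymptotically (indeed exponentially) stable. -/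
/-!
Along the closed loop the energy `W(t) = q̃(t)ᵀ M(t) q̃(t)` satisfies `W' = -2 W` exactly: by symmetry
`W' = 2 q̃ᵀ M q̃' + q̃ᵀ M' q̃`, and `M q̃' = -M q̃ - (1/2) M' q̃`, so the two `M'` terms cancel. Hence
`W(t) = W(0) exp(-2t)`, and uniform positive definiteness turns this into the bound on `q̃ᵀ q̃`.
Convergence follows since every squared coordinate is at most `q̃ᵀ q̃`.
-/

open Matrix

theorem hasDerivAt_mulVec {n : ℕ} {A : ℝ → Matrix (Fin n) (Fin n) ℝ}
    {A' : Matrix (Fin n) (Fin n) ℝ} {v : ℝ → Fin n → ℝ} {v' : Fin n → ℝ} {t : ℝ}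
    (hA : ∀ i j, HasDerivAt (fun s => A s i j) (A' i j) t) (hv : HasDerivAt v v' t) :
    HasDerivAt (fun s => A s *ᵥ v s) (A' *ᵥ v t + A t *ᵥ v') t :=
  hasDerivAt_pi.2 fun i => hasDerivAt_dotProduct (hasDerivAt_pi.2 (hA i)) hv

/-- Under the closed-loop equation `q̃′ = −q̃ − (1/2) M⁻¹ M′ q̃` and
uniform positive definiteness of `M` (`xᵀ M(t) x ≥ m ‖x‖²` with `m > 0`), the
squared Euclidean norm of the tracking error satisfies
`‖q̃(t)‖² ≤ (2/m) · V₁(0) · exp(−2t)` for `t ≥ 0`, where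
`V₁(0) = (1/2) q̃(0)ᵀ M(0) q̃(0)`; in particular `q̃(t) → 0` as `t → ∞`.
(Here `‖x‖² = x ⬝ᵥ x` is the squared Euclidean norm.) -/
theorem statement2 (n : ℕ) (hn : 1 ≤ n)
    (M M' : ℝ → Matrix (Fin n) (Fin n) ℝ)
    (hMderiv : ∀ t : ℝ, ∀ i j : Fin n, HasDerivAt (fun s => M s i j) (M' t i j) t)
    (hMsymm : ∀ t : ℝ, (M t).IsSymm)
    (hMpd : ∀ t : ℝ, (M t).PosDef)
    (qtil qtil' : ℝ → Fin n → ℝ)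
    (hq : ∀ t : ℝ, HasDerivAt qtil (qtil' t) t)
    (hclosed : ∀ t : ℝ, qtil' t = -qtil t - (1/2 : ℝ) • ((M t)⁻¹ *ᵥ (M' t *ᵥ qtil t)))
    (m : ℝ) (hm : 0 < m)
    (hunif : ∀ t : ℝ, ∀ x : Fin n → ℝ, m * (x ⬝ᵥ x) ≤ x ⬝ᵥ (M t *ᵥ x)) :
    (∀ t : ℝ, 0 ≤ t →
      qtil t ⬝ᵥ qtil t
        ≤ (2 / m) * ((1/2 : ℝ) * (qtil 0 ⬝ᵥ (M 0 *ᵥ qtil 0))) * Real.exp (-2 * t)) ∧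
    Filter.Tendsto qtil Filter.atTop (nhds 0) := by
  have hW : ∀ t, HasDerivAt (fun s => qtil s ⬝ᵥ (M s *ᵥ qtil s))
      (-2 * (qtil t ⬝ᵥ (M t *ᵥ qtil t))) t := by
    intro t
    have hMq : M t *ᵥ qtil' t = -(M t *ᵥ qtil t) - (1/2 : ℝ) • (M' t *ᵥ qtil t) := by
      have hdet : IsUnit (M t).det := (hMpd t).det_pos.ne'.isUnit
      rw [hclosed t, mulVec_sub, mulVec_neg, mulVec_smul, mulVec_mulVec, mul_nonsing_inv _ hdet,
        one_mulVec]
    have hsw : qtil' t ⬝ᵥ (M t *ᵥ qtil t) = qtil t ⬝ᵥ (M t *ᵥ qtil' t) := by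
      rw [dotProduct_mulVec, ← mulVec_transpose, (hMsymm t).eq, dotProduct_comm]
    convert hasDerivAt_dotProduct (hq t) (hasDerivAt_mulVec (hMderiv t) (hq t)) using 1
    rw [hsw, dotProduct_add, hMq, dotProduct_sub, dotProduct_neg, dotProduct_smul, smul_eq_mul]
    ring
  have hWexp : ∀ t, qtil t ⬝ᵥ (M t *ᵥ qtil t)
      = (qtil 0 ⬝ᵥ (M 0 *ᵥ qtil 0)) * Real.exp (-2 * t) := by
    intro t
    have hE : ∀ s : ℝ, HasDerivAt
        (fun s => (qtil s ⬝ᵥ (M s *ᵥ qtil s)) * Real.exp (2 * s)) 0 s := by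
      intro s
      refine ((hW s).mul ((hasDerivAt_id s).const_mul (2 : ℝ)).exp).congr_deriv ?_
      simp only [id]
      ring
    have hc := is_const_of_deriv_eq_zero (fun s => (hE s).differentiableAt)
      (fun s => (hE s).deriv) t 0
    simp only [mul_zero, Real.exp_zero, mul_one] at hc
    rw [← hc, mul_assoc, ← Real.exp_add]
    simp
  have hbound : ∀ t : ℝ, qtil t ⬝ᵥ qtil t
      ≤ (2 / m) * ((1/2 : ℝ) * (qtil 0 ⬝ᵥ (M 0 *ᵥ qtil 0))) * Real.exp (-2 * t) := by
    intro t
    have h := hunif t (qtil t)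
    rw [hWexp t, mul_comm, ← le_div_iff₀ hm] at h
    refine h.trans_eq ?_
    ring
  refine ⟨fun t _ => hbound t, tendsto_pi_nhds.2 fun i => ?_⟩
  have hexp : Filter.Tendsto (fun t : ℝ => Real.exp (-2 * t)) Filter.atTop (nhds 0) :=
    Real.tendsto_exp_atBot.comp (Filter.tendsto_id.const_mul_atTop_of_neg (by norm_num))
  have hlim := hexp.const_mul ((2 / m) * ((1/2 : ℝ) * (qtil 0 ⬝ᵥ (M 0 *ᵥ qtil 0))))
  rw [mul_zero] at hlim
  have hsq : Filter.Tendsto (fun t => qtil t i ^ 2) Filter.atTop (nhds 0) := by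
    refine squeeze_zero (fun t => sq_nonneg _) (fun t => le_trans ?_ (hbound t)) hlim
    rw [sq]
    exact Finset.single_le_sum (f := fun j => qtil t j * qtil t j)
      (fun j _ => mul_self_nonneg _) (Finset.mem_univ i)
  have habs := hsq.sqrt
  simp only [Real.sqrt_sq_eq_abs, Real.sqrt_zero] at habs
  exact (tendsto_zero_iff_abs_tendsto_zero _).2 habs
end

section
/- Suppose the filtered velocity tracking error q_r : ℝ → (Fin n → ℝ) is differentiable and satisfies M(t) q_r′(t) = −(M(t) + C(t)) q_r(t) for all t, that P M(t) is symmetric for all t with P C(t) + C(t)ᵀ P = P M′(t) for all t, and that P M is uniformly positive definite: there is μ > 0 with xᵀ (P M(t)) x ≥ μ ‖x‖² for all t and all x. Then ‖q_r(t)‖ ≤ sqrt(2 W(0)/μ) · exp(−t) for all t ≥ 0, where W(0) = (1/2) q_r(0)ᵀ P M(0) q_r(0); i.e., the filtered velocity tracking error converges to zero exponentially with rate 1. -/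
open Matrix

/-!
The Lyapunov function `V t = q_r(t)ᵀ (P M(t)) q_r(t)` satisfies `V' = -2 V`: symmetry of `P M`
turns the two terms containing `q_r'` into `2 q_rᵀ P M q_r' = -2 q_rᵀ P (M + C) q_r`, and the
remaining term `q_rᵀ P M' q_r = q_rᵀ (P C + Cᵀ P) q_r = 2 q_rᵀ P C q_r` cancels the contribution
of `C`. Hence `V t = V 0 * exp (-2 t)`, and the uniform lower bound `μ ‖q_r‖² ≤ V` gives the
estimate after taking square roots.
-/

lemma hasDerivAt_dotProduct_mulVec {n : ℕ} {A : ℝ → Matrix (Fin n) (Fin n) ℝ}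
    {A' : Matrix (Fin n) (Fin n) ℝ} {q : ℝ → Fin n → ℝ} {q' : Fin n → ℝ} {t : ℝ}
    (hA : ∀ i j, HasDerivAt (fun s => A s i j) (A' i j) t) (hq : HasDerivAt q q' t) :
    HasDerivAt (fun s => q s ⬝ᵥ (A s *ᵥ q s))
      (q' ⬝ᵥ (A t *ᵥ q t) + q t ⬝ᵥ (A' *ᵥ q t + A t *ᵥ q')) t := by
  have hqi := hasDerivAt_pi.1 hq
  have hAq : ∀ i, HasDerivAt (fun s => (A s *ᵥ q s) i) ((A' *ᵥ q t + A t *ᵥ q') i) t := by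
    intro i
    have h := HasDerivAt.fun_sum (u := Finset.univ) fun j _ => (hA i j).mul (hqi j)
    simpa [mulVec, dotProduct, Finset.sum_add_distrib] using h
  have h := HasDerivAt.fun_sum (u := Finset.univ) fun i _ => (hqi i).mul (hAq i)
  simpa [dotProduct, Finset.sum_add_distrib] using h

/-- Under the closed-loop equation `M q_r′ = −(M + C) q_r`, with
`P M(t)` symmetric, `P C(t) + C(t)ᵀ P = P M′(t)`, and `P M` uniformly positive
definite (`xᵀ (P M(t)) x ≥ μ ‖x‖²` with `μ > 0`), the Euclidean norm of the
filtered velocity tracking error satisfies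
`‖q_r(t)‖ ≤ sqrt(2 W(0)/μ) · exp(−t)` for `t ≥ 0`, where
`W(0) = (1/2) q_r(0)ᵀ P M(0) q_r(0)`.
(Here `‖x‖ = Real.sqrt (x ⬝ᵥ x)` is the Euclidean norm.) -/
theorem statement5 (n : ℕ) (hn : 1 ≤ n)
    (M M' C : ℝ → Matrix (Fin n) (Fin n) ℝ)
    (hMderiv : ∀ t : ℝ, ∀ i j : Fin n, HasDerivAt (fun s => M s i j) (M' t i j) t)
    (hMsymm : ∀ t : ℝ, (M t).IsSymm)
    (hMpd : ∀ t : ℝ, (M t).PosDef)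
    (hCcont : ∀ i j : Fin n, Continuous fun t => C t i j)
    (P : Matrix (Fin n) (Fin n) ℝ) (hPsymm : P.IsSymm) (hPpd : P.PosDef)
    (qr qr' : ℝ → Fin n → ℝ)
    (hqr : ∀ t : ℝ, HasDerivAt qr (qr' t) t)
    (hclosed : ∀ t : ℝ, M t *ᵥ qr' t = -((M t + C t) *ᵥ qr t))
    (hPM : ∀ t : ℝ, (P * M t).IsSymm)
    (hPC : ∀ t : ℝ, P * C t + (C t)ᵀ * P = P * M' t)
    (μ : ℝ) (hμ : 0 < μ)
    (hunif : ∀ t : ℝ, ∀ x : Fin n → ℝ, μ * (x ⬝ᵥ x) ≤ x ⬝ᵥ ((P * M t) *ᵥ x)) :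
    ∀ t : ℝ, 0 ≤ t →
      Real.sqrt (qr t ⬝ᵥ qr t)
        ≤ Real.sqrt (2 * ((1/2 : ℝ) * (qr 0 ⬝ᵥ ((P * M 0) *ᵥ qr 0))) / μ)
            * Real.exp (-t) := by
  have hder : ∀ t, HasDerivAt (fun s => qr s ⬝ᵥ ((P * M s) *ᵥ qr s))
      (-2 * (qr t ⬝ᵥ ((P * M t) *ᵥ qr t))) t := by
    intro t
    have hA : ∀ i j, HasDerivAt (fun s => (P * M s) i j) ((P * M' t) i j) t := by
      intro i j
      simp only [mul_apply]
      exact HasDerivAt.fun_sum fun k _ => (hMderiv t k j).const_mul (P i k)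
    refine (hasDerivAt_dotProduct_mulVec hA (hqr t)).congr_deriv ?_
    have hsymm : qr' t ⬝ᵥ ((P * M t) *ᵥ qr t) = qr t ⬝ᵥ ((P * M t) *ᵥ qr' t) := by
      rw [dotProduct_mulVec, ← mulVec_transpose, (hPM t).eq, dotProduct_comm]
    have hq' : (P * M t) *ᵥ qr' t = -((P * M t) *ᵥ qr t + (P * C t) *ᵥ qr t) := by
      rw [← mulVec_mulVec, hclosed t, mulVec_neg, mulVec_mulVec, mul_add, add_mulVec]
    have hCt : qr t ⬝ᵥ (((C t)ᵀ * P) *ᵥ qr t) = qr t ⬝ᵥ ((P * C t) *ᵥ qr t) := by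
      have h : (C t)ᵀ * P = (P * C t)ᵀ := by rw [transpose_mul, hPsymm.eq]
      rw [h, mulVec_transpose, dotProduct_comm, ← dotProduct_mulVec]
    rw [hsymm, ← hPC t, hq', add_mulVec]
    simp only [dotProduct_add, dotProduct_neg, hCt]
    ring
  have hconst : ∀ t, (qr t ⬝ᵥ ((P * M t) *ᵥ qr t)) * Real.exp (2 * t)
      = qr 0 ⬝ᵥ ((P * M 0) *ᵥ qr 0) := by
    intro t
    have hd : ∀ s, HasDerivAt
        (fun s => (qr s ⬝ᵥ ((P * M s) *ᵥ qr s)) * Real.exp (2 * s)) 0 s := by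
      intro s
      refine ((hder s).mul ((hasDerivAt_id s).const_mul 2).exp).congr_deriv ?_
      simp only [id]
      ring
    simpa using is_const_of_deriv_eq_zero (fun s => (hd s).differentiableAt)
      (fun s => (hd s).deriv) t 0
  intro t _
  have hexp : Real.exp (2 * t) * Real.exp (-t) ^ 2 = 1 := by
    rw [← Real.exp_nat_mul, ← Real.exp_add]
    simp
  apply Real.sqrt_le_iff.2
  have hV0 : 0 ≤ qr 0 ⬝ᵥ ((P * M 0) *ᵥ qr 0) :=
    (mul_nonneg hμ.le (by simpa using dotProduct_star_self_nonneg (qr 0))).trans (hunif 0 (qr 0))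
  refine ⟨by positivity, ?_⟩
  rw [mul_pow, Real.sq_sqrt (by positivity), div_mul_eq_mul_div, le_div_iff₀ hμ, ← hconst t]
  calc qr t ⬝ᵥ qr t * μ = μ * (qr t ⬝ᵥ qr t) := mul_comm _ _
    _ ≤ qr t ⬝ᵥ ((P * M t) *ᵥ qr t) := hunif t (qr t)
    _ = _ := by linear_combination -(qr t ⬝ᵥ ((P * M t) *ᵥ qr t)) * hexp
end

section
/- Let λ > 0 with λ ≠ 1, let q̃, q_r : ℝ → (Fin n → ℝ) with q̃ differentiable and q̃′(t) + λ q̃(t) = q_r(t) for all t ≥ 0, and suppose there is c ≥ 0 with ‖q_r(t)‖ ≤ c · exp(−t) for all t ≥ 0. Then, with μ = min(λ, 1), the position tracking error satisfies ‖q̃(t)‖ ≤ (‖q̃(0)‖ + c/|λ − 1|) · exp(−μ t) for all t ≥ 0; in particular exponential decay of the filtered velocity tracking error implies exponential decay of the position tracking error. -/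
/-! Variation of constants: `exp (lam * t) • q̃ t` has derivative `exp (lam * t) • q_r t`, whose norm
is at most `c * exp ((lam - 1) * t)`. The mean value inequality against an explicit majorant gives
`‖q̃ t‖ ≤ exp (-lam * t) * ‖q̃ 0‖ + c / (lam - 1) * (exp (-t) - exp (-lam * t))`, and the stated bound
follows by separating `lam < 1` from `lam > 1`. -/

open Matrix

/-- The Euclidean norm written through the dot product is the norm of `EuclideanSpace`. -/
lemma sqrt_dotProduct_self_eq_norm {n : ℕ} (x : Fin n → ℝ) :
    Real.sqrt (x ⬝ᵥ x) = ‖WithLp.toLp 2 x‖ := by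
  rw [EuclideanSpace.norm_eq]
  simp [dotProduct, pow_two]

/-- Variation-of-constants estimate, in any real normed space. -/
lemma norm_le_of_filtered_error_decay {E : Type*} [NormedAddCommGroup E] [NormedSpace ℝ E]
    {lam c : ℝ} (hlam1 : lam ≠ 1) {q q' r : ℝ → E}
    (hq : ∀ t, HasDerivAt q (q' t) t)
    (hrel : ∀ t, 0 ≤ t → q' t + lam • q t = r t)
    (hr : ∀ t, 0 ≤ t → ‖r t‖ ≤ c * Real.exp (-t)) {t : ℝ} (ht : 0 ≤ t) :
    ‖q t‖ ≤ ‖q 0‖ * Real.exp (-lam * t)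
      + c / (lam - 1) * (Real.exp (-t) - Real.exp (-lam * t)) := by
  have hne : lam - 1 ≠ 0 := sub_ne_zero.mpr hlam1
  have hexp (a s : ℝ) : HasDerivAt (fun s => Real.exp (a * s)) (Real.exp (a * s) * a) s := by
    simpa using ((hasDerivAt_id s).const_mul a).exp
  have hf (s : ℝ) := (hexp lam s).smul (hq s)
  have hB (s : ℝ) : HasDerivAt
      (fun s => ‖q 0‖ + c / (lam - 1) * (Real.exp ((lam - 1) * s) - 1))
      (c * Real.exp ((lam - 1) * s)) s := by
    have hd := (((hexp (lam - 1) s).sub_const 1).const_mul (c / (lam - 1))).const_add ‖q 0‖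
    have he : c / (lam - 1) * (Real.exp ((lam - 1) * s) * (lam - 1))
        = c * Real.exp ((lam - 1) * s) := by
      rw [mul_comm (Real.exp _), ← mul_assoc, div_mul_cancel₀ c hne]
    exact he ▸ hd
  have key := image_norm_le_of_norm_deriv_right_le_deriv_boundary (a := 0) (b := t)
    (fun s _ => (hf s).continuousAt.continuousWithinAt)
    (fun s _ => (hf s).hasDerivWithinAt) (by simp) hB
    (fun s hs => by
      have h1 : Real.exp (lam * s) • q' s + (Real.exp (lam * s) * lam) • q s
          = Real.exp (lam * s) • r s := by
        rw [← hrel s hs.1, smul_add, smul_smul]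
      rw [h1, norm_smul, Real.norm_of_nonneg (Real.exp_pos _).le]
      calc Real.exp (lam * s) * ‖r s‖ ≤ Real.exp (lam * s) * (c * Real.exp (-s)) := by
            gcongr; exact hr s hs.1
        _ = c * Real.exp ((lam - 1) * s) := by
            rw [show (lam - 1) * s = lam * s + -s by ring, Real.exp_add]; ring)
    (Set.right_mem_Icc.mpr ht)
  simp only [Pi.smul_apply', norm_smul, Real.norm_of_nonneg (Real.exp_pos _).le] at key
  have h2 : Real.exp (-lam * t) * Real.exp (lam * t) = 1 := by
    rw [← Real.exp_add]; simp
  have h3 : Real.exp (-lam * t) * Real.exp ((lam - 1) * t) = Real.exp (-t) := by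
    rw [← Real.exp_add]; ring_nf
  have h4 := mul_le_mul_of_nonneg_left key (Real.exp_pos (-lam * t)).le
  rw [← mul_assoc, h2, one_mul] at h4
  refine h4.trans (le_of_eq ?_)
  rw [← h3]; ring

/-- If `q̃` is differentiable with `q̃′ + λ q̃ = q_r` on `t ≥ 0`
(λ > 0, λ ≠ 1), and `‖q_r(t)‖ ≤ c · exp(−t)` for `t ≥ 0` with `c ≥ 0`, then with
`μ = min(λ, 1)` one has `‖q̃(t)‖ ≤ (‖q̃(0)‖ + c/|λ − 1|) · exp(−μ t)` for all
`t ≥ 0`. (Here `‖x‖ = Real.sqrt (x ⬝ᵥ x)` is the Euclidean norm.) -/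
theorem statement6 (n : ℕ) (hn : 1 ≤ n) (lam : ℝ) (hlam : 0 < lam) (hlam1 : lam ≠ 1)
    (qtil qtil' qr : ℝ → Fin n → ℝ)
    (hq : ∀ t : ℝ, HasDerivAt qtil (qtil' t) t)
    (hrel : ∀ t : ℝ, 0 ≤ t → qtil' t + lam • qtil t = qr t)
    (c : ℝ) (hc : 0 ≤ c)
    (hqrdecay : ∀ t : ℝ, 0 ≤ t → Real.sqrt (qr t ⬝ᵥ qr t) ≤ c * Real.exp (-t)) :
    ∀ t : ℝ, 0 ≤ t →
      Real.sqrt (qtil t ⬝ᵥ qtil t)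
        ≤ (Real.sqrt (qtil 0 ⬝ᵥ qtil 0) + c / |lam - 1|)
            * Real.exp (-(min lam 1) * t) := by
  intro t ht
  simp only [sqrt_dotProduct_self_eq_norm] at hqrdecay ⊢
  have hq2 (s : ℝ) : HasDerivAt (fun s => WithLp.toLp 2 (qtil s)) (WithLp.toLp 2 (qtil' s)) s :=
    ((PiLp.continuousLinearEquiv 2 ℝ (fun _ : Fin n => ℝ)).symm.hasFDerivAt).comp_hasDerivAt s (hq s)
  have key := norm_le_of_filtered_error_decay hlam1 hq2
    (fun s hs => by rw [← hrel s hs]; rfl) hqrdecay ht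
  refine key.trans ?_
  rcases lt_or_gt_of_ne hlam1 with h | h
  · rw [min_eq_left h.le, abs_of_neg (by linarith), add_mul]
    have hk : 0 ≤ c / (-(lam - 1)) * Real.exp (-t) :=
      mul_nonneg (div_nonneg hc (by linarith)) (Real.exp_pos _).le
    rw [div_neg] at hk ⊢
    linarith
  · rw [min_eq_right h.le, abs_of_pos (by linarith), add_mul, neg_one_mul]
    have hk : 0 ≤ c / (lam - 1) * Real.exp (-lam * t) :=
      mul_nonneg (div_nonneg hc (by linarith)) (Real.exp_pos _).le
    have he : Real.exp (-lam * t) ≤ Real.exp (-t) := Real.exp_le_exp.mpr (by nlinarith)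
    have hm := mul_le_mul_of_nonneg_left he (norm_nonneg (WithLp.toLp 2 (qtil 0)))
    linarith
end
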